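/- For all integers k >= 0, j >= 0, m >= 1, r >= 1, setting n = 2m + kj, and for all rationals t_1, ..., t_m: \sum_{Q \in Q_{n,k,r}^{m,j}} \prod_{i=1}^{m} t_i^{\alpha_i(Q)} = (m/((m+j+1)(m+j))) * C(m+j, j) * C(m+j+1, r) * (r!/m!) * B_{m,r}(1!t_1, 2!t_2, ...). Consequently, for nonnegative integers r_1, ..., r_m with r_1 + 2*r_2 + ... + m*r_m = m and r = r_1 + ... + r_m, the number of words in Q_{n,k}^{m,j} with \alpha_i = r_i for all i equals (m/((m+j+1)(m+j))) * C(m+j, m) * C(m+j+1, r) * r!/(r_1! ... r_m!). -/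

import Mathlib

open Finset

inductive Step : Type
  | u | d | h
deriving DecidableEq

/-- Lengths of maximal blocks of letters with `wt s ≠ none`, weighted by `wt`. -/
def runs (wt : Step → Option ℕ) : List Step → List ℕ
  | [] => []
  | s :: l =>
    match wt s, runs wt l with
    | none, r => r
    | some n, r =>
      match l with
      | [] => [n]
      | s' :: _ =>
        match wt s' with
        | none => n :: r
        | some _ =>
          match r with
          | a :: rest => (n + a) :: rest
          | [] => [n]

def uRuns : List Step → List ℕ :=
  runs (fun s => match s with | Step.u => some 1 | _ => none)

def uhRuns (k : ℕ) : List Step → List ℕ :=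
  runs (fun s => match s with | Step.u => some 1 | Step.h => some k | Step.d => none)

def alpha (i : ℕ) (w : List Step) : ℕ := (uRuns w).count i

def beta (i : ℕ) (w : List Step) : ℕ := (uRuns w).tail.count i

def IsNonneg (w : List Step) : Prop :=
  ∀ i : ℕ, (w.take i).count Step.d ≤ (w.take i).count Step.u

def pathSet (m j : ℕ) : Set (List Step) :=
  {w | w.count Step.u = m ∧ w.count Step.d = m ∧ w.count Step.h = j ∧ IsNonneg w}

/-- no horizontal step lies on the x-axis -/
def NoLowH (w : List Step) : Prop :=
  ∀ (i : ℕ) (hi : i < w.length), w[i]'hi = Step.h →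
    (w.take i).count Step.u ≠ (w.take i).count Step.d

def qSet (m j : ℕ) : Set (List Step) :=
  {w | w ∈ pathSet m j ∧ NoLowH w}

/-- normalized partial Bell polynomial (r!/m!) B_{m,r}(1!t₁,2!t₂,…) -/
def bellNorm (m r : ℕ) (t : ℕ → ℚ) : ℚ :=
  ∑ f : Fin m → Fin (m + 1),
    if (∑ i : Fin m, (f i : ℕ)) = r ∧ (∑ i : Fin m, ((i : ℕ) + 1) * (f i : ℕ)) = m then
      (r.factorial : ℚ) / (∏ i : Fin m, ((f i : ℕ).factorial : ℚ)) * ∏ i : Fin m, t ((i : ℕ) + 1) ^ (f i : ℕ)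
    else 0

/-- normalized potential polynomial  P_p^{(lam)}(1!t₁,2!t₂,…)/p! -/
def potential (lam p : ℕ) (t : ℕ → ℚ) : ℚ :=
  ∑ r ∈ Finset.range (p + 1), (Nat.choose lam r : ℚ) * bellNorm p r t



/-! ### Auxiliary material -/

/-- good words starting from height `l` and ending at height `0` -/
def Good : ℕ → List Step → Prop
  | l, [] => l = 0
  | l, Step.u :: w => Good (l + 1) w
  | l, Step.d :: w => 1 ≤ l ∧ Good (l - 1) w
  | l, Step.h :: w => 1 ≤ l ∧ Good l w

theorem good_iff (w : List Step) : ∀ l : ℕ, Good l w ↔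
    ((∀ i : ℕ, (w.take i).count Step.d ≤ l + (w.take i).count Step.u) ∧
      l + w.count Step.u = w.count Step.d ∧
      (∀ (i : ℕ) (hi : i < w.length), w[i]'hi = Step.h →
        l + (w.take i).count Step.u ≠ (w.take i).count Step.d)) := by
  induction w with
  | nil => intro l; simp [Good]
  | cons s w ih =>
    intro l
    have key : ∀ (p q : ℕ → Prop), (∀ i, p i) ↔ (p 0 ∧ ∀ i, p (i+1)) := by
      intro p _
      constructor
      · intro h; exact ⟨h 0, fun i => h _⟩
      · rintro ⟨h0, h1⟩ (_ | i)
        · exact h0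
        · exact h1 i
    rw [key (fun i => ((s :: w).take i).count Step.d ≤ l + ((s :: w).take i).count Step.u)
      (fun _ => True),
      key (fun i => ∀ (hi : i < (s :: w).length), (s :: w)[i]'hi = Step.h →
        l + ((s :: w).take i).count Step.u ≠ ((s :: w).take i).count Step.d) (fun _ => True)]
    cases s with
    | u =>
      simp only [Good, ih]
      simp [List.count_cons, add_assoc, add_comm, add_left_comm]
    | d =>
      simp only [Good, ih]
      rcases l with _ | l
      · simp
        intro h
        have := h 0
        simp at this
      · simp [List.count_cons]
        grind
    | h =>
      simp only [Good, ih]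
      simp [List.count_cons]
      grind

theorem mem_qSet_iff (m j : ℕ) (w : List Step) :
    w ∈ qSet m j ↔ (Good 0 w ∧ w.count Step.u = m ∧ w.count Step.h = j) := by
  rw [good_iff]
  simp only [qSet, pathSet, IsNonneg, NoLowH, Set.mem_ofPred_eq, zero_add]
  grind

/-- the finset of good words of length `n` -/
def gw : ℕ → ℕ → ℕ → ℕ → Finset (List Step)
  | 0, m, l, j => if m = 0 ∧ l = 0 ∧ j = 0 then {[]} else ∅
  | n + 1, m, l, j =>
    (if 1 ≤ m then (gw n (m - 1) (l + 1) j).image (List.cons Step.u) else ∅) ∪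
    ((if 1 ≤ l then (gw n m (l - 1) j).image (List.cons Step.d) else ∅) ∪
    (if 1 ≤ l ∧ 1 ≤ j then (gw n m l (j - 1)).image (List.cons Step.h) else ∅))

theorem mem_gw (w : List Step) : ∀ n m l j : ℕ, w ∈ gw n m l j ↔
    (w.length = n ∧ Good l w ∧ w.count Step.u = m ∧ w.count Step.h = j) := by
  induction w with
  | nil =>
    rintro (_ | n) m l j
    · simp only [gw]
      split_ifs with h
      · simp [Good, h]
      · simp [Good]; omega
    · simp only [gw]
      split_ifs <;> simp
  | cons s w ih =>
    rintro (_ | n) m l j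
    · simp only [gw]
      split_ifs with h <;> simp
    · simp only [gw]
      cases s <;> split_ifs <;> simp [Good, ih, List.count_cons] <;> grind

/-- run lengths, with an initial run of length `c` in progress -/
def ur : ℕ → List Step → List ℕ
  | c, [] => if c = 0 then [] else [c]
  | c, Step.u :: w => ur (c + 1) w
  | c, Step.d :: w => (if c = 0 then [] else [c]) ++ ur 0 w
  | c, Step.h :: w => (if c = 0 then [] else [c]) ++ ur 0 w

theorem ur_succ (w : List Step) : ∀ c, ∃ a rest, ur (c + 1) w = a :: rest ∧
    ur (c + 2) w = (1 + a) :: rest := by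
  induction w with
  | nil => intro c; exact ⟨c + 1, [], by simp [ur], by simp [ur]; omega⟩
  | cons s w ih =>
    intro c
    cases s with
    | u => exact ih (c + 1)
    | d => exact ⟨c + 1, ur 0 w, by simp [ur], by simp [ur]; omega⟩
    | h => exact ⟨c + 1, ur 0 w, by simp [ur], by simp [ur]; omega⟩

theorem uRuns_eq (w : List Step) : uRuns w = ur 0 w := by
  induction w with
  | nil => simp [uRuns, runs, ur]
  | cons s w ih =>
    unfold uRuns at ih ⊢
    cases s with
    | d => simp [runs, ur, ih]
    | h => simp [runs, ur, ih]
    | u =>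
      rw [runs, ih]
      rcases w with _ | ⟨s, w⟩
      · simp [ur]
      · cases s with
        | d => simp [ur]
        | h => simp [ur]
        | u =>
          obtain ⟨a, rest, h1, h2⟩ := ur_succ w 0
          simp only [ur]
          simp only [zero_add] at h1 h2 ⊢
          rw [h1, h2]

theorem ur_sum (w : List Step) : ∀ c, (ur c w).sum = c + w.count Step.u := by
  induction w with
  | nil => intro c; by_cases h : c = 0 <;> simp [ur, h]
  | cons s w ih =>
    intro c
    by_cases h : c = 0 <;> cases s <;> simp [ur, h, ih, List.count_cons] <;> omega

theorem ur_pos (w : List Step) : ∀ c, ∀ a ∈ ur c w, 1 ≤ a := by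
  induction w with
  | nil => intro c; by_cases h : c = 0 <;> simp [ur, h]; omega
  | cons s w ih =>
    intro c
    by_cases h : c = 0 <;> cases s <;> simp [ur, h] <;> grind

section weights
variable {R : Type*} [CommRing R] [Algebra ℚ R]

/-- the weight of a word, with an initial run of length `c` in progress -/
def wtW (t : ℕ → R) (c : ℕ) (w : List Step) : R := ((ur c w).map t).prod

theorem wtW_d (t : ℕ → R) (ht : t 0 = 1) (c : ℕ) (w : List Step) :
    wtW t c (Step.d :: w) = t c * wtW t 0 w := by
  by_cases h : c = 0 <;> simp [wtW, ur, h, ht]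

theorem wtW_h (t : ℕ → R) (ht : t 0 = 1) (c : ℕ) (w : List Step) :
    wtW t c (Step.h :: w) = t c * wtW t 0 w := by
  by_cases h : c = 0 <;> simp [wtW, ur, h, ht]

/-- power sums coefficients -/
noncomputable def pc (t : ℕ → R) (N s : ℕ) : R := PowerSeries.coeff s (PowerSeries.mk t ^ N)

theorem pc_zero (t : ℕ → R) (s : ℕ) : pc t 0 s = if s = 0 then 1 else 0 := by
  simp [pc, PowerSeries.coeff_one]

theorem pc_succ (t : ℕ → R) (N s : ℕ) :
    ∑ i ∈ range (s + 1), t i * pc t N (s - i) = pc t (N + 1) s := by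
  rw [pc, pow_succ', PowerSeries.coeff_mul,
    Finset.Nat.sum_antidiagonal_eq_sum_range_succ_mk]
  simp [pc]

theorem pc_euler (t : ℕ → R) (N s : ℕ) :
    (N + 1 : R) * ∑ i ∈ range (s + 1), (i : R) * (t i * pc t N (s - i)) =
      s * pc t (N + 1) s := by
  rcases s with _ | s
  · simp
  · rw [Finset.sum_range_succ']
    have h := congrArg (PowerSeries.coeff s)
      (Derivation.leibniz_pow (PowerSeries.derivative R) (PowerSeries.mk t) (N + 1))
    simp only [PowerSeries.coeff_derivative, smul_eq_mul,
      nsmul_eq_mul, Nat.add_sub_cancel] at h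
    rw [show pc t (N + 1) (s + 1) = PowerSeries.coeff (s + 1) (PowerSeries.mk t ^ (N + 1)) from rfl]
    push_cast
    push_cast at h
    rw [mul_comm (s + 1 : R), h, show ((N : PowerSeries R) + 1) = ((N + 1 : ℕ) : PowerSeries R) by push_cast; rfl,
      ← nsmul_eq_mul, map_nsmul, mul_comm (PowerSeries.mk t ^ N),
      PowerSeries.coeff_mul, Finset.Nat.sum_antidiagonal_eq_sum_range_succ_mk]
    simp only [PowerSeries.coeff_derivative, PowerSeries.coeff_mk, nsmul_eq_mul, pc]
    push_cast
    simp only [zero_mul, add_zero]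
    congr 1
    apply Finset.sum_congr rfl
    intro i hi
    ring

/-- weight after leaving a run at height `l` -/
noncomputable def rr (t : ℕ → R) (l m j : ℕ) : R :=
  if l + m + j = 0 then 1 else
    algebraMap ℚ R ((Nat.choose (l + m + j) j : ℚ) * l / (l + m + j : ℕ)) * pc t (l + m + j) m

/-- the total weight -/
noncomputable def xx (t : ℕ → R) (c l m j : ℕ) : R :=
  ∑ i ∈ range (m + 1), t (c + i) * rr t (l + i) (m - i) j

/-- closed form -/
noncomputable def kap (l m j : ℕ) : ℚ :=
  if l + m + j = 0 then 1 else
    (Nat.choose (l + m + j) j : ℚ) / (l + m + j : ℕ) * (l + m / (l + m + j + 1 : ℕ))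

theorem xx_zero (t : ℕ → R) (ht : t 0 = 1) (l m j : ℕ) :
    xx t 0 l m j = algebraMap ℚ R (kap l m j) * pc t (l + m + j + 1) m := by
  unfold xx kap
  by_cases h : l + m + j = 0
  · obtain ⟨rfl, rfl, rfl⟩ : l = 0 ∧ m = 0 ∧ j = 0 := by omega
    simp [rr, ht, pc]
  · rw [if_neg h]
    have h1 : ∀ i ∈ range (m + 1), t (0 + i) * rr t (l + i) (m - i) j =
        algebraMap ℚ R ((Nat.choose (l + m + j) j : ℚ) / (l + m + j : ℕ)) *
          (l * (t i * pc t (l + m + j) (m - i)) + i * (t i * pc t (l + m + j) (m - i))) := by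
      intro i hi
      have hi' : l + i + (m - i) + j = l + m + j := by
        have := Finset.mem_range.1 hi
        omega
      rw [rr, hi', if_neg h, zero_add]
      have : ((l : R) + i) = algebraMap ℚ R (l + i : ℚ) := by simp
      have e : algebraMap ℚ R ((Nat.choose (l + m + j) j : ℚ) * (l + i : ℕ) / (l + m + j : ℕ)) =
          algebraMap ℚ R ((Nat.choose (l + m + j) j : ℚ) / (l + m + j : ℕ)) * (l + i) := by
        rw [this, ← map_mul]
        congr 1
        push_cast
        ring
      rw [e]
      ring
    rw [Finset.sum_congr rfl h1, ← Finset.mul_sum, Finset.sum_add_distrib, ← Finset.mul_sum,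
      pc_succ, map_mul, mul_assoc]
    congr 1
    have h2 := pc_euler t (l + m + j) m
    have h3 : algebraMap ℚ R (1 / (l + m + j + 1 : ℕ)) * (((l + m + j : ℕ) : R) + 1) = 1 := by
      have : (((l + m + j : ℕ) : R) + 1) = algebraMap ℚ R ((l + m + j + 1 : ℕ)) := by simp
      rw [this, ← map_mul]
      rw [one_div_mul_cancel (by positivity), map_one]
    have h4 : ∑ i ∈ range (m + 1), (i : R) * (t i * pc t (l + m + j) (m - i)) =
        algebraMap ℚ R (1 / (l + m + j + 1 : ℕ)) * (m * pc t (l + m + j + 1) m) := by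
      rw [← h2, ← mul_assoc, h3, one_mul]
    rw [h4, map_add, add_mul, div_eq_mul_one_div (m : ℚ), map_mul]
    simp only [map_natCast]
    ring

theorem rr_pos (t : ℕ → R) (ht : t 0 = 1) (l m j : ℕ) :
    rr t (l + 1) m j = xx t 0 l m j + if 1 ≤ j then xx t 0 (l + 1) m (j - 1) else 0 := by
  rw [xx_zero t ht, xx_zero t ht, rr, if_neg (by omega)]
  rcases j with _ | j
  · simp only [if_neg (by omega : ¬ 1 ≤ 0), add_zero]
    rw [show l + 1 + m = l + m + 1 by omega]
    congr 2
    unfold kap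
    by_cases h : l + m = 0
    · obtain ⟨rfl, rfl⟩ : l = 0 ∧ m = 0 := by omega
      simp
    · rw [if_neg (by omega)]
      have : ((l : ℚ) + m) ≠ 0 := by exact_mod_cast h
      have : ((l : ℚ) + m + 1) ≠ 0 := by positivity
      simp
      field_simp
      ring
  · rw [if_pos (by omega)]
    simp only [Nat.add_sub_cancel]
    rw [show l + 1 + m + (j + 1) = l + m + j + 2 by omega,
      show l + m + (j + 1) + 1 = l + m + j + 2 by omega,
      show l + 1 + m + j + 1 = l + m + j + 2 by omega, ← add_mul, ← map_add]
    congr 2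
    unfold kap
    rw [if_neg (by omega), if_neg (by omega)]
    rw [show l + m + (j + 1) = l + m + j + 1 by omega,
      show l + 1 + m + j = l + m + j + 1 by omega]
    have e1 : (Nat.choose (l + m + j + 2) (j + 1) : ℚ) =
        Nat.choose (l + m + j + 1) j + Nat.choose (l + m + j + 1) (j + 1) := by
      exact_mod_cast Nat.choose_succ_succ (l + m + j + 1) j
    have e2 : (Nat.choose (l + m + j + 1) (j + 1) : ℚ) * (j + 1) =
        Nat.choose (l + m + j + 1) j * (l + m + 1) := by
      have := Nat.choose_succ_right_eq (l + m + j + 1) j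
      rw [show l + m + j + 1 - j = l + m + 1 by omega] at this
      exact_mod_cast this
    rw [e1]
    have e3 : (Nat.choose (l + m + j + 1) j : ℚ)  =
      (Nat.choose (l + m + j + 1) (j + 1) : ℚ) * (j + 1) / (l + m + 1) := by
      rw [e2]; field_simp
    rw [e3]
    push_cast
    field_simp
    ring

theorem sum_gw (t : ℕ → R) (ht : t 0 = 1) (n : ℕ) : ∀ c m l j : ℕ, n = 2 * m + l + j →
    ∑ w ∈ gw n m l j, wtW t c w = xx t c l m j := by
  induction n with
  | zero =>
    intro c m l j h
    obtain ⟨rfl, rfl, rfl⟩ : l = 0 ∧ m = 0 ∧ j = 0 := by omega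
    by_cases hc : c = 0 <;> simp [gw, wtW, ur, xx, rr, hc, ht]
  | succ n ih =>
    intro c m l j h
    rw [gw, Finset.sum_union, Finset.sum_union]
    · have hu : ∑ w ∈ (if 1 ≤ m then (gw n (m - 1) (l + 1) j).image (List.cons Step.u) else ∅),
          wtW t c w = if 1 ≤ m then xx t (c + 1) (l + 1) (m - 1) j else 0 := by
        split_ifs with hm
        · rw [Finset.sum_image (by simp), ← ih _ _ _ _ (by omega)]
          rfl
        · simp
      have hd : ∑ w ∈ (if 1 ≤ l then (gw n m (l - 1) j).image (List.cons Step.d) else ∅),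
          wtW t c w = if 1 ≤ l then t c * xx t 0 (l - 1) m j else 0 := by
        split_ifs with hm
        · rw [Finset.sum_image (by simp), ← ih _ _ _ _ (by omega), Finset.mul_sum]
          exact Finset.sum_congr rfl fun w _ => wtW_d t ht c w
        · simp
      have hh : ∑ w ∈ (if 1 ≤ l ∧ 1 ≤ j then (gw n m l (j - 1)).image (List.cons Step.h) else ∅),
          wtW t c w = if 1 ≤ l ∧ 1 ≤ j then t c * xx t 0 l m (j - 1) else 0 := by
        split_ifs with hm
        · rw [Finset.sum_image (by simp), ← ih _ _ _ _ (by omega), Finset.mul_sum]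
          exact Finset.sum_congr rfl fun w _ => wtW_h t ht c w
        · simp
      rw [hu, hd, hh]
      have hx : xx t c l m j = (if 1 ≤ m then xx t (c + 1) (l + 1) (m - 1) j else 0) +
          t c * rr t l m j := by
        rcases m with _ | m
        · simp [xx]
        · rw [xx, Finset.sum_range_succ', if_pos (by omega), xx]
          simp only [Nat.add_sub_cancel, add_zero, Nat.sub_zero]
          congr 1
          apply Finset.sum_congr rfl
          intro i _
          rw [Nat.add_sub_add_right, add_right_comm c 1 i, add_right_comm l 1 i]
          rfl
      rw [hx]
      congr 1
      rcases l with _ | l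
      · simp only [if_neg (by omega : ¬ 1 ≤ 0), if_neg (by omega : ¬ (1 ≤ 0 ∧ 1 ≤ j))]
        rw [rr, if_neg (by omega)]
        simp
      · rw [rr_pos t ht]
        simp only [Nat.add_sub_cancel]
        by_cases hj : 1 ≤ j <;> simp [hj, mul_add]
    · rw [Finset.disjoint_left]
      intro w
      split_ifs <;> simp
      grind
    · rw [Finset.disjoint_left]
      intro w
      split_ifs <;> simp <;> grind

end weights

/-! ### Coefficient extraction -/

/-- generic weights -/
noncomputable def tt (m : ℕ) (a : ℕ) : MvPolynomial ℕ ℚ :=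
  if a = 0 then 1 else if a ≤ m then MvPolynomial.X a else 0

/-- exponent vector -/
noncomputable def ev (m : ℕ) (rv : ℕ → ℕ) : ℕ →₀ ℕ :=
  ∑ i ∈ Finset.Icc 1 m, Finsupp.single i (rv i)

theorem ev_apply (m : ℕ) (rv : ℕ → ℕ) (i : ℕ) :
    ev m rv i = if i ∈ Finset.Icc 1 m then rv i else 0 := by
  rw [ev, Finsupp.finsetSum_apply]
  simp only [Finsupp.single_apply]
  rw [Finset.sum_ite_eq']

theorem ev_eq_iff (m : ℕ) (rv rv' : ℕ → ℕ) :
    ev m rv = ev m rv' ↔ ∀ i ∈ Finset.Icc 1 m, rv i = rv' i := by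
  constructor
  · intro h i hi
    have := DFunLike.congr_fun h i
    rwa [ev_apply, ev_apply, if_pos hi, if_pos hi] at this
  · intro h
    ext i
    rw [ev_apply, ev_apply]
    split_ifs with hi
    · exact h i hi
    · rfl

theorem prod_tt (m : ℕ) (rv : ℕ → ℕ) :
    ∏ i ∈ Finset.Icc 1 m, tt m i ^ rv i = MvPolynomial.monomial (ev m rv) 1 := by
  rw [ev, MvPolynomial.monomial_sum_one]
  apply Finset.prod_congr rfl
  intro i hi
  rw [Finset.mem_Icc] at hi
  rw [tt, if_neg (by omega), if_pos hi.2, MvPolynomial.X_pow_eq_monomial]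

theorem mk_tt (m : ℕ) : PowerSeries.mk (tt m) =
    ∑ a ∈ insert 0 (Finset.Icc 1 m), PowerSeries.C (tt m a) * PowerSeries.X ^ a := by
  ext1 n
  rw [map_sum]
  simp only [PowerSeries.coeff_mk, PowerSeries.coeff_C_mul, PowerSeries.coeff_X_pow, mul_ite,
    mul_one, mul_zero]
  rw [Finset.sum_ite_eq]
  split_ifs with h
  · rfl
  · simp only [Finset.mem_insert, Finset.mem_Icc] at h
    rw [tt, if_neg (by omega), if_neg (by omega)]

theorem zero_notMem_Icc (m : ℕ) : 0 ∉ Finset.Icc 1 m := by simp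

theorem pc_tt (m N s : ℕ) : pc (tt m) N s =
    ∑ k ∈ Finset.piAntidiag (insert 0 (Finset.Icc 1 m)) N,
      if s = ∑ i ∈ Finset.Icc 1 m, i * k i then
        MvPolynomial.monomial (ev m k) (Nat.multinomial (insert 0 (Finset.Icc 1 m)) k : ℚ)
      else 0 := by
  rw [pc, mk_tt, Finset.sum_pow_eq_sum_piAntidiag, map_sum]
  apply Finset.sum_congr rfl
  intro k hk
  have h : ∏ i ∈ insert 0 (Finset.Icc 1 m), (PowerSeries.C (tt m i) * PowerSeries.X ^ i) ^ k i =
      PowerSeries.C (MvPolynomial.monomial (ev m k) 1) *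
        PowerSeries.X ^ (∑ i ∈ Finset.Icc 1 m, i * k i) := by
    rw [Finset.prod_insert (zero_notMem_Icc m)]
    simp only [mul_pow, Finset.prod_mul_distrib, ← pow_mul, Finset.prod_pow_eq_pow_sum,
      ← map_pow]
    rw [← map_prod, prod_tt]
    simp [tt]
  rw [h, ← nsmul_eq_mul, map_nsmul, PowerSeries.coeff_C_mul, PowerSeries.coeff_X_pow]
  split_ifs
  · rw [mul_one, ← map_nsmul, nsmul_eq_mul, mul_one]
  · simp

theorem coeff_pc (m N r : ℕ) (rv : ℕ → ℕ) (h1 : (∑ i ∈ Finset.Icc 1 m, i * rv i) = m)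
    (h2 : (∑ i ∈ Finset.Icc 1 m, rv i) = r) :
    MvPolynomial.coeff (ev m rv) (pc (tt m) N m) =
      Nat.choose N r * (r.factorial : ℚ) / ∏ i ∈ Finset.Icc 1 m, ((rv i).factorial : ℚ) := by
  rw [pc_tt, MvPolynomial.coeff_sum]
  have hP : (∏ i ∈ Finset.Icc 1 m, ((rv i).factorial : ℚ)) ≠ 0 :=
    Finset.prod_ne_zero_iff.2 fun i _ => by positivity
  have hkey : ∀ k ∈ Finset.piAntidiag (insert 0 (Finset.Icc 1 m)) N, ev m k = ev m rv →
      k 0 + r = N := by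
    intro k hk he
    rw [ev_eq_iff] at he
    rw [Finset.mem_piAntidiag, Finset.sum_insert (zero_notMem_Icc m)] at hk
    rw [← hk.1, ← h2, Finset.sum_congr rfl he]
  by_cases hN : r ≤ N
  · let k0 : ℕ → ℕ := fun a => if a = 0 then N - r else if a ∈ Finset.Icc 1 m then rv a else 0
    have hk0 : ∀ i ∈ Finset.Icc 1 m, k0 i = rv i := by
      intro i hi
      have : i ≠ 0 := by rw [Finset.mem_Icc] at hi; omega
      simp only [k0, if_neg this, if_pos hi]
    have hk00 : k0 0 = N - r := by simp [k0]
    have hsum : ∑ i ∈ insert 0 (Finset.Icc 1 m), k0 i = N := by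
      rw [Finset.sum_insert (zero_notMem_Icc m), Finset.sum_congr rfl hk0, h2, hk00]
      omega
    rw [Finset.sum_eq_single k0]
    · rw [if_pos, MvPolynomial.coeff_monomial, if_pos ((ev_eq_iff _ _ _).2 hk0)]
      · have hm := Nat.multinomial_spec (insert 0 (Finset.Icc 1 m)) k0
        rw [hsum, Finset.prod_insert (zero_notMem_Icc m), hk00,
          Finset.prod_congr rfl (fun i hi => by rw [hk0 i hi]),
          ← Nat.choose_mul_factorial_mul_factorial hN] at hm
        rw [eq_div_iff hP]
        have hf : ((N - r).factorial : ℚ) ≠ 0 := by positivity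
        apply mul_left_cancel₀ hf
        have hm' := congrArg (fun x : ℕ => (x : ℚ)) hm
        push_cast at hm'
        linear_combination hm'
      · rw [Finset.sum_congr rfl (fun i hi => by rw [hk0 i hi]), h1]
    · intro k hk hne
      split_ifs
      · rw [MvPolynomial.coeff_monomial, if_neg]
        intro he
        apply hne
        have hh := hkey k hk he
        rw [ev_eq_iff] at he
        rw [Finset.mem_piAntidiag] at hk
        funext i
        by_cases hi0 : i = 0
        · subst hi0; omega
        · by_cases hi : i ∈ Finset.Icc 1 m
          · rw [he i hi, hk0 i hi]
          · have : k0 i = 0 := by simp only [k0, if_neg hi0, if_neg hi]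
            rw [this]
            by_contra hc
            have := hk.2 i hc
            rw [Finset.mem_insert] at this
            tauto
      · simp
    · intro hk
      exfalso
      apply hk
      rw [Finset.mem_piAntidiag]
      refine ⟨hsum, ?_⟩
      intro i hi
      rw [Finset.mem_insert]
      by_contra hc
      push Not at hc
      apply hi
      simp only [k0, if_neg hc.1, if_neg hc.2]
  · rw [Nat.choose_eq_zero_of_lt (by omega)]
    simp only [Nat.cast_zero, zero_mul, zero_div]
    apply Finset.sum_eq_zero
    intro k hk
    split_ifs
    · rw [MvPolynomial.coeff_monomial, if_neg]
      intro he
      have := hkey k hk he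
      omega
    · simp

theorem list_prod_Icc {M : Type*} [CommMonoid M] (m : ℕ) (l : List ℕ)
    (hl : ∀ a ∈ l, a ∈ Finset.Icc 1 m) (f : ℕ → M) :
    (l.map f).prod = ∏ i ∈ Finset.Icc 1 m, f i ^ l.count i := by
  rw [Finset.prod_list_map_count]
  apply Finset.prod_subset
  · intro a ha
    exact hl a (List.mem_toFinset.1 ha)
  · intro a _ ha
    rw [List.count_eq_zero_of_not_mem (fun h => ha (List.mem_toFinset.2 h)), pow_zero]

theorem list_sum_Icc (m : ℕ) (l : List ℕ)
    (hl : ∀ a ∈ l, a ∈ Finset.Icc 1 m) (f : ℕ → ℕ) :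
    (l.map f).sum = ∑ i ∈ Finset.Icc 1 m, l.count i * f i := by
  rw [Finset.sum_list_map_count]
  apply Finset.sum_subset
  · intro a ha
    exact hl a (List.mem_toFinset.1 ha)
  · intro a _ ha
    rw [List.count_eq_zero_of_not_mem (fun h => ha (List.mem_toFinset.2 h)), zero_smul]

theorem uRuns_mem (m : ℕ) (w : List Step) (hw : w.count Step.u = m) :
    ∀ a ∈ uRuns w, a ∈ Finset.Icc 1 m := by
  intro a ha
  rw [uRuns_eq] at ha
  have h1 := ur_pos w 0 a ha
  have h2 := List.le_sum_of_mem ha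
  rw [ur_sum] at h2
  rw [Finset.mem_Icc]
  omega

theorem sum_alpha (m : ℕ) (w : List Step) (hw : w.count Step.u = m) :
    ∑ i ∈ Finset.Icc 1 m, alpha i w = (uRuns w).length := by
  have := list_sum_Icc m (uRuns w) (uRuns_mem m w hw) (fun _ => 1)
  simp at this
  rw [this]
  rfl

theorem sum_mul_alpha (m : ℕ) (w : List Step) (hw : w.count Step.u = m) :
    ∑ i ∈ Finset.Icc 1 m, i * alpha i w = m := by
  have := list_sum_Icc m (uRuns w) (uRuns_mem m w hw) (fun a => a)
  rw [List.map_id', uRuns_eq, ur_sum, ← uRuns_eq, hw, zero_add] at this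
  refine Eq.trans (Finset.sum_congr rfl fun i _ => mul_comm _ _) this.symm

theorem mem_gw_iff_qSet (m j : ℕ) (w : List Step) :
    w ∈ gw (2 * m + 0 + j) m 0 j ↔ w ∈ qSet m j := by
  rw [mem_gw, mem_qSet_iff]
  constructor
  · exact fun h => h.2
  · intro h
    refine ⟨?_, h⟩
    have h1 := (good_iff w 0).1 h.1
    have : ∀ w : List Step, w.length = w.count Step.u + w.count Step.d + w.count Step.h := by
      intro w
      induction w with
      | nil => simp
      | cons s w ih => cases s <;> simp [ih] <;> omega
    rw [this]
    omega

open Classical in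
theorem card_formula (m j r : ℕ) (hm : 1 ≤ m) (rv : ℕ → ℕ)
    (h1 : (∑ i ∈ Finset.Icc 1 m, i * rv i) = m) (h2 : (∑ i ∈ Finset.Icc 1 m, rv i) = r) :
    (((gw (2 * m + 0 + j) m 0 j).filter
      (fun w => ∀ i ∈ Finset.Icc 1 m, alpha i w = rv i)).card : ℚ) =
    (m : ℚ) / ((m + j + 1) * (m + j)) * Nat.choose (m + j) m *
          Nat.choose (m + j + 1) r * (r.factorial : ℚ) /
          ∏ i ∈ Finset.Icc 1 m, ((rv i).factorial : ℚ) := by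
  have key := congrArg (MvPolynomial.coeff (ev m rv))
    (sum_gw (tt m) (by simp [tt]) (2 * m + 0 + j) 0 m 0 j rfl)
  rw [xx_zero _ (by simp [tt]), MvPolynomial.coeff_sum, MvPolynomial.algebraMap_eq,
    MvPolynomial.coeff_C_mul, coeff_pc m _ r rv h1 h2] at key
  have hl : ∑ w ∈ gw (2 * m + 0 + j) m 0 j, MvPolynomial.coeff (ev m rv) (wtW (tt m) 0 w) =
      (((gw (2 * m + 0 + j) m 0 j).filter
        (fun w => ∀ i ∈ Finset.Icc 1 m, alpha i w = rv i)).card : ℚ) := by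
    rw [Finset.card_filter]
    push_cast
    apply Finset.sum_congr rfl
    intro w hw
    rw [mem_gw] at hw
    have : wtW (tt m) 0 w = MvPolynomial.monomial (ev m (fun i => alpha i w)) 1 := by
      rw [← prod_tt, wtW, ← uRuns_eq, list_prod_Icc m _ (uRuns_mem m w hw.2.2.1)]
      rfl
    rw [this, MvPolynomial.coeff_monomial]
    simp only [ev_eq_iff]
  rw [← hl, key, kap, if_neg (by omega), Nat.choose_symm_add]
  simp only [zero_add]
  push_cast
  have hP : (∏ i ∈ Finset.Icc 1 m, ((rv i).factorial : ℚ)) ≠ 0 :=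
    Finset.prod_ne_zero_iff.2 fun i _ => by positivity
  have : (m : ℚ) + j ≠ 0 := by positivity
  field_simp
  ring

theorem prod_fin_Icc {M : Type*} [CommMonoid M] (m : ℕ) (F : ℕ → M) :
    ∏ i : Fin m, F ((i : ℕ) + 1) = ∏ i ∈ Finset.Icc 1 m, F i := by
  rw [Fin.prod_univ_eq_prod_range (fun i => F (i + 1)) m]
  induction m with
  | zero => simp
  | succ m ih => rw [Finset.prod_range_succ, ih, Finset.prod_Icc_succ_top (by omega)]

theorem sum_fin_Icc {M : Type*} [AddCommMonoid M] (m : ℕ) (F : ℕ → M) :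
    ∑ i : Fin m, F ((i : ℕ) + 1) = ∑ i ∈ Finset.Icc 1 m, F i :=
  prod_fin_Icc (M := Multiplicative M) m F

theorem alpha_le (m i : ℕ) (hi : i ∈ Finset.Icc 1 m) (w : List Step) (hw : w.count Step.u = m) :
    alpha i w < m + 1 := by
  have h := Finset.single_le_sum (f := fun i => i * alpha i w) (fun _ _ => Nat.zero_le _) hi
  rw [sum_mul_alpha m w hw] at h
  rw [Finset.mem_Icc] at hi
  have : 1 * alpha i w ≤ i * alpha i w := Nat.mul_le_mul_right _ hi.1
  omega

open Classical in
theorem part_one (j m r : ℕ) (hm : 1 ≤ m) (t : ℕ → ℚ) :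
    (∑ w ∈ (gw (2 * m + 0 + j) m 0 j).filter (fun w => (uRuns w).length = r),
        ∏ i ∈ Finset.Icc 1 m, t i ^ alpha i w) =
      (m : ℚ) / ((m + j + 1) * (m + j)) * Nat.choose (m + j) j *
        Nat.choose (m + j + 1) r * bellNorm m r t := by
  rw [← Finset.sum_fiberwise _
    (fun w => (fun i : Fin m => Fin.ofNat (m + 1) (alpha ((i : ℕ) + 1) w))), bellNorm,
    Finset.mul_sum]
  apply Finset.sum_congr rfl
  intro f _
  obtain ⟨rv, hrv⟩ : ∃ rv : ℕ → ℕ, ∀ i : Fin m, (f i : ℕ) = rv ((i : ℕ) + 1) := by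
    refine ⟨fun i => if h : 1 ≤ i ∧ i ≤ m then (f ⟨i - 1, by omega⟩ : ℕ) else 0, ?_⟩
    intro i
    have : 1 ≤ (i : ℕ) + 1 ∧ (i : ℕ) + 1 ≤ m := ⟨by omega, i.2⟩
    simp only [dif_pos this]
    rfl
  have hmem : ∀ w ∈ gw (2 * m + 0 + j) m 0 j,
      ((fun i : Fin m => Fin.ofNat (m + 1) (alpha ((i : ℕ) + 1) w)) = f ↔
        ∀ i ∈ Finset.Icc 1 m, alpha i w = rv i) := by
    intro w hw
    rw [mem_gw] at hw
    constructor
    · intro h i hi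
      have hi' := Finset.mem_Icc.1 hi
      have h3 := congrArg (fun x : Fin (m + 1) => (x : ℕ)) (congrFun h ⟨i - 1, by omega⟩)
      simp only [hrv, Fin.ofNat] at h3
      rw [Nat.sub_add_cancel hi'.1, Nat.mod_eq_of_lt (alpha_le m i hi w hw.2.2.1)] at h3
      exact h3
    · intro h
      funext i
      have hi : (i : ℕ) + 1 ∈ Finset.Icc 1 m := Finset.mem_Icc.2 ⟨by omega, i.2⟩
      apply Fin.ext
      rw [hrv, ← h _ hi]
      exact Nat.mod_eq_of_lt (alpha_le m _ hi w hw.2.2.1)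
  simp only [hrv]
  rw [sum_fin_Icc m rv, sum_fin_Icc m (fun i => i * rv i),
    prod_fin_Icc m (fun i => ((rv i).factorial : ℚ)), prod_fin_Icc m (fun i => t i ^ rv i)]
  split_ifs with hc
  · have hset : ((gw (2 * m + 0 + j) m 0 j).filter (fun w => (uRuns w).length = r)).filter
        (fun w => (fun i : Fin m => Fin.ofNat (m + 1) (alpha ((i : ℕ) + 1) w)) = f) =
        (gw (2 * m + 0 + j) m 0 j).filter (fun w => ∀ i ∈ Finset.Icc 1 m, alpha i w = rv i) := by
      ext w
      simp only [Finset.mem_filter]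
      constructor
      · rintro ⟨⟨h1, h2⟩, h3⟩
        exact ⟨h1, (hmem w h1).1 h3⟩
      · rintro ⟨h1, h2⟩
        refine ⟨⟨h1, ?_⟩, (hmem w h1).2 h2⟩
        rw [← sum_alpha m w ((mem_gw _ _ _ _ _).1 h1).2.2.1, Finset.sum_congr rfl h2, hc.1]
    have hcon : ∀ w ∈ (gw (2 * m + 0 + j) m 0 j).filter
        (fun w => ∀ i ∈ Finset.Icc 1 m, alpha i w = rv i),
        ∏ i ∈ Finset.Icc 1 m, t i ^ alpha i w = ∏ i ∈ Finset.Icc 1 m, t i ^ rv i := by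
      intro w hw
      have hw2 : ∀ i ∈ Finset.Icc 1 m, alpha i w = rv i := by
        simp only [Finset.mem_filter] at hw
        exact hw.2
      exact Finset.prod_congr rfl fun i hi => by rw [hw2 i hi]
    rw [hset, Finset.sum_congr rfl hcon,
      Finset.sum_const, nsmul_eq_mul, card_formula m j r hm rv hc.2 hc.1, Nat.choose_symm_add]
    ring
  · rw [mul_zero]
    apply Finset.sum_eq_zero
    intro w hw
    exfalso
    simp only [Finset.mem_filter] at hw
    obtain ⟨⟨h1, h2⟩, h3⟩ := hw
    have h4 := (hmem w h1).1 h3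
    have hu := ((mem_gw _ _ _ _ _).1 h1).2.2.1
    apply hc
    constructor
    · rw [← Finset.sum_congr rfl h4, sum_alpha m w hu, h2]
    · refine Eq.trans (Finset.sum_congr rfl fun i hi => ?_) (sum_mul_alpha m w hu)
      rw [h4 i hi]

theorem stmt9 (k j m r : ℕ) (hm : 1 ≤ m) (hr : 1 ≤ r) (t : ℕ → ℚ) :
    (∑ᶠ w ∈ {w ∈ qSet m j | (uRuns w).length = r},
        ∏ i ∈ Finset.Icc 1 m, t i ^ alpha i w) =
      (m : ℚ) / ((m + j + 1) * (m + j)) * Nat.choose (m + j) j *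
        Nat.choose (m + j + 1) r * bellNorm m r t ∧
    ∀ rv : ℕ → ℕ, (∑ i ∈ Finset.Icc 1 m, i * rv i) = m →
      (∑ i ∈ Finset.Icc 1 m, rv i) = r →
      (Set.ncard {w ∈ qSet m j | ∀ i ∈ Finset.Icc 1 m, alpha i w = rv i} : ℚ) =
        (m : ℚ) / ((m + j + 1) * (m + j)) * Nat.choose (m + j) m *
          Nat.choose (m + j + 1) r * (r.factorial : ℚ) /
          ∏ i ∈ Finset.Icc 1 m, ((rv i).factorial : ℚ) := by
  constructor
  · rw [← part_one j m r hm t, ← finsum_mem_coe_finset]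
    apply finsum_mem_congr _ (fun _ _ => rfl)
    ext w
    rw [Finset.mem_coe, Finset.mem_filter, mem_gw_iff_qSet]
    rfl
  · intro rv h1 h2
    rw [← card_formula m j r hm rv h1 h2, ← Set.ncard_coe_finset]
    congr 2
    simp only [Finset.coe_filter, mem_gw_iff_qSet]
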